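/- Let 0 < p ≤ q < ∞ and let f be a measurable function on [0,1]². Then (∫₀¹(∫₀¹ |f(x₁,x₂)|^p dx₂)^{q/p} dx₁)^{1/q} ≤ (∫₀¹(∫₀¹ (f^{*₁}(t₁,x₂))^p dx₂)^{q/p} dt₁)^{1/q}. -/

import Mathlib

open MeasureTheory Set

/-- The decreasing rearrangement on `[0,1]` (with Lebesgue measure) of a measurable
function `g`: `g^*(t) = inf {σ ≥ 0 : |{x ∈ [0,1] : |g(x)| > σ}| ≤ t}`. -/
noncomputable def rearr (g : ℝ → ℝ) (t : ℝ) : ℝ :=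
  sInf {σ : ℝ | 0 ≤ σ ∧ volume {x ∈ Icc (0:ℝ) 1 | σ < |g x|} ≤ ENNReal.ofReal t}

/-- The rearrangement of `x₁ ↦ f (x₁, x₂)` in the first variable, the second one fixed. -/
noncomputable def rearr1 (f : ℝ → ℝ → ℝ) (t₁ x₂ : ℝ) : ℝ :=
  rearr (fun x₁ => f x₁ x₂) t₁

namespace RearrAux

/-- Lebesgue measure on the unit interval. -/
noncomputable def mu : Measure ℝ := volume.restrict (Icc (0:ℝ) 1)

instance : IsFiniteMeasure mu := by unfold mu; infer_instance

lemma mu_le_one (s : Set ℝ) : mu s ≤ 1 := by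
  refine (measure_mono (subset_univ s)).trans ?_
  simp [mu]

lemma mu_Iic : mu (Iic 0) = 0 := by
  rw [mu, Measure.restrict_apply measurableSet_Iic]
  have : Iic (0:ℝ) ∩ Icc 0 1 ⊆ {0} := by
    rintro x ⟨h1, h2, h3⟩
    exact le_antisymm h1 h2
  exact measure_mono_null this (by simp)

lemma mu_Ioo {m : ENNReal} (hm : m ≤ 1) : mu {t : ℝ | 0 < t ∧ ENNReal.ofReal t < m} = m := by
  have hne : m ≠ ⊤ := ne_top_of_le_ne_top ENNReal.one_ne_top hm
  have h1 : m.toReal ≤ 1 := by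
    have := ENNReal.toReal_mono ENNReal.one_ne_top hm
    simpa using this
  have : {t : ℝ | 0 < t ∧ ENNReal.ofReal t < m} = Ioo 0 m.toReal := by
    ext t
    simp only [mem_ofPred_eq, mem_Ioo]
    refine and_congr_right fun ht => ?_
    rw [ENNReal.ofReal_lt_iff_lt_toReal ht.le hne]
  rw [this, mu, Measure.restrict_apply measurableSet_Ioo]
  have h2 : Ioo 0 m.toReal ∩ Icc (0:ℝ) 1 = Ioo 0 m.toReal := by
    apply inter_eq_left.2
    intro x hx
    exact ⟨hx.1.le, hx.2.le.trans h1⟩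
  rw [h2, Real.volume_Ioo, sub_zero, ENNReal.ofReal_toReal hne]

lemma mu_eq {g : ℝ → ℝ} (hg : Measurable g) (σ : ℝ) :
    volume {x ∈ Icc (0:ℝ) 1 | σ < |g x|} = mu {x | σ < |g x|} := by
  rw [mu, Measure.restrict_apply (measurableSet_lt measurable_const hg.abs)]
  congr 1
  ext x
  simp [and_comm]

lemma lt_rearr_iff {g : ℝ → ℝ} (hg : Measurable g) {t σ : ℝ} (ht : 0 < t) (hσ : 0 ≤ σ) :
    σ < rearr g t ↔ ENNReal.ofReal t < mu {x | σ < |g x|} := by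
  unfold rearr
  simp only [mu_eq hg]
  have hbdd : BddBelow {σ : ℝ | 0 ≤ σ ∧ mu {x | σ < |g x|} ≤ ENNReal.ofReal t} :=
    ⟨0, fun s hs => hs.1⟩
  constructor
  · intro h
    by_contra hc
    exact absurd (csInf_le hbdd ⟨hσ, not_lt.1 hc⟩) (not_le.2 h)
  · intro h
    have hne : {σ : ℝ | 0 ≤ σ ∧ mu {x | σ < |g x|} ≤ ENNReal.ofReal t}.Nonempty := by
      have hT := tendsto_measure_iInter_atTop (μ := mu) (s := fun n : ℕ => {x | (n:ℝ) < |g x|})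
        (fun n => (measurableSet_lt measurable_const hg.abs).nullMeasurableSet)
        (by
          intro m n hmn x hx
          have : (m:ℝ) ≤ n := by exact_mod_cast hmn
          exact lt_of_le_of_lt this hx) ⟨0, measure_ne_top _ _⟩
      have hE : (⋂ n : ℕ, {x | (n:ℝ) < |g x|}) = ∅ := by
        ext x
        simp only [mem_iInter, mem_ofPred_eq, mem_empty_iff_false, iff_false, not_forall, not_lt]
        exact exists_nat_ge _
      rw [hE, measure_empty] at hT
      have := (hT.eventually (gt_mem_nhds (ENNReal.ofReal_pos.2 ht))).exists
      obtain ⟨n, hn⟩ := this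
      exact ⟨n, Nat.cast_nonneg n, hn.le⟩
    have hU : {x | σ < |g x|} = ⋃ n : ℕ, {x | σ + 1 / ((n:ℝ) + 1) < |g x|} := by
      ext x
      simp only [mem_ofPred_eq, mem_iUnion]
      constructor
      · intro hx
        obtain ⟨n, hn⟩ := exists_nat_one_div_lt (sub_pos.2 hx)
        exact ⟨n, by linarith⟩
      · rintro ⟨n, hn⟩
        have : 0 < 1 / ((n:ℝ) + 1) := Nat.one_div_pos_of_nat
        linarith
    have hmono : Monotone fun n : ℕ => {x | σ + 1 / ((n:ℝ) + 1) < |g x|} := by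
      intro m n hmn x hx
      have : 1 / ((n:ℝ) + 1) ≤ 1 / ((m:ℝ) + 1) := Nat.one_div_le_one_div hmn
      simp only [mem_ofPred_eq] at hx ⊢
      linarith
    rw [hU, hmono.measure_iUnion, lt_iSup_iff] at h
    obtain ⟨n, hn⟩ := h
    have hp : 0 < 1 / ((n:ℝ) + 1) := Nat.one_div_pos_of_nat
    refine lt_of_lt_of_le (by linarith : σ < σ + 1 / ((n:ℝ) + 1)) (le_csInf hne ?_)
    rintro s ⟨hs0, hs⟩
    by_contra hc
    push Not at hc
    refine absurd (hn.trans_le ((measure_mono ?_).trans hs)) (lt_irrefl _)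
    intro x hx
    exact hc.trans hx

lemma rearr_nonneg (g : ℝ → ℝ) (t : ℝ) : 0 ≤ rearr g t :=
  Real.sInf_nonneg fun _ hs => hs.1

/-- The rearrangement, set to zero for nonpositive arguments. -/
noncomputable def R (g : ℝ → ℝ) (t : ℝ) : ℝ := if 0 < t then rearr g t else 0

lemma R_nonneg (g : ℝ → ℝ) (t : ℝ) : 0 ≤ R g t := by
  unfold R; split_ifs
  · exact rearr_nonneg g t
  · exact le_rfl

lemma R_measurable {f : ℝ → ℝ → ℝ} (hf : Measurable (Function.uncurry f)) :
    Measurable fun z : ℝ × ℝ => R (fun x => f x z.2) z.1 := by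
  have hs : ∀ y, Measurable fun x => f x y := fun y => hf.comp (measurable_id.prodMk measurable_const)
  apply measurable_of_Ioi
  intro σ
  rcases lt_or_ge σ 0 with h | h
  · convert MeasurableSet.univ
    ext z
    simp only [mem_preimage, mem_Ioi, mem_univ, iff_true]
    exact h.trans_le (R_nonneg _ _)
  · have hA : MeasurableSet {z : ℝ × ℝ | σ < |f z.2 z.1|} :=
      measurableSet_lt measurable_const (hf.comp measurable_swap).abs
    have hm : Measurable fun y => mu {x | σ < |f x y|} := measurable_measure_prodMk_left hA
    have : (fun z : ℝ × ℝ => R (fun x => f x z.2) z.1) ⁻¹' Ioi σ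
        = {z | 0 < z.1} ∩ {z | ENNReal.ofReal z.1 < mu {x | σ < |f x z.2|}} := by
      ext z
      simp only [mem_preimage, mem_Ioi, mem_inter_iff, mem_ofPred_eq, R]
      split_ifs with h0
      · simp [h0, lt_rearr_iff (hs z.2) h0 h]
      · simp [h0, h]
    rw [this]
    exact (measurableSet_lt measurable_const measurable_fst).inter
      (measurableSet_lt measurable_fst.ennreal_ofReal (hm.comp measurable_snd))

/-- `u'` is a decreasing rearrangement of `u` on the unit interval. -/
structure IsR (u u' : ℝ → ℝ) : Prop where
  mu_ : Measurable u
  mu' : Measurable u'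
  nn : ∀ x, 0 ≤ u x
  nn' : ∀ x, 0 ≤ u' x
  iff : ∀ t, 0 < t → ∀ σ, 0 ≤ σ → (σ < u' t ↔ ENNReal.ofReal t < mu {x | σ < u x})

lemma isR_R {g : ℝ → ℝ} (hg : Measurable g) : IsR (fun x => |g x|) (R g) where
  mu_ := hg.abs
  mu' := (R_measurable (f := fun x _ => g x) (hg.comp measurable_fst)).comp
    (measurable_id.prodMk (measurable_const (a := (0:ℝ))))
  nn x := abs_nonneg _
  nn' x := R_nonneg _ _
  iff t ht σ hσ := by simp only [R, ht, if_true, lt_rearr_iff hg ht hσ]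

lemma IsR.rpow {u u' : ℝ → ℝ} (h : IsR u u') {p : ℝ} (hp : 0 < p) :
    IsR (fun x => u x ^ p) (fun x => u' x ^ p) where
  mu_ := h.mu_.pow_const p
  mu' := h.mu'.pow_const p
  nn x := Real.rpow_nonneg (h.nn x) p
  nn' x := Real.rpow_nonneg (h.nn' x) p
  iff t ht σ hσ := by
    rw [← Real.rpow_inv_lt_iff_of_pos hσ (h.nn' t) hp, h.iff t ht _ (Real.rpow_nonneg hσ _)]
    simp only [Real.rpow_inv_lt_iff_of_pos hσ (h.nn _) hp]

lemma IsR.inter_le {u u' v v' : ℝ → ℝ} (h : IsR u u') (k : IsR v v') {a b : ℝ}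
    (ha : 0 ≤ a) (hb : 0 ≤ b) :
    mu ({x | b < v x} ∩ {x | a < u x}) ≤ mu ({x | b < v' x} ∩ {x | a < u' x}) := by
  have hm : min (mu {x | b < v x}) (mu {x | a < u x}) ≤ 1 := (min_le_left _ _).trans (mu_le_one _)
  calc _ ≤ min (mu {x | b < v x}) (mu {x | a < u x}) :=
        le_min (measure_mono inter_subset_left) (measure_mono inter_subset_right)
    _ = _ := (mu_Ioo hm).symm
    _ ≤ _ := by
        apply measure_mono
        rintro t ⟨ht, hlt⟩
        rw [lt_min_iff] at hlt
        exact ⟨(k.iff t ht b hb).2 hlt.1, (h.iff t ht a ha).2 hlt.2⟩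

lemma IsR.le {u u' : ℝ → ℝ} (h : IsR u u') {a : ℝ} (ha : 0 ≤ a) :
    mu {x | a < u x} ≤ mu {x | a < u' x} := by
  simpa using h.inter_le h ha ha

lemma IsR.ge {u u' : ℝ → ℝ} (h : IsR u u') {a : ℝ} (ha : 0 ≤ a) :
    mu {x | a < u' x} ≤ mu {x | a < u x} := by
  calc _ ≤ mu (Iic 0 ∪ {t | 0 < t ∧ ENNReal.ofReal t < mu {x | a < u x}}) := by
        apply measure_mono
        intro t ht
        rcases le_or_gt t 0 with h0 | h0
        · exact Or.inl h0
        · exact Or.inr ⟨h0, (h.iff t h0 a ha).1 ht⟩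
    _ ≤ _ := measure_union_le _ _
    _ = _ := by rw [mu_Iic, mu_Ioo (mu_le_one _), zero_add]

lemma layer (ν : Measure ℝ) {u : ℝ → ℝ} (hu : Measurable u) (h0 : ∀ x, 0 ≤ u x) :
    ∫⁻ x, ENNReal.ofReal (u x) ∂ν = ∫⁻ a in Ioi (0:ℝ), ν {x | a < u x} :=
  lintegral_eq_lintegral_meas_lt ν (Filter.Eventually.of_forall h0) hu.aemeasurable

lemma IsR.lintegral_le {u u' : ℝ → ℝ} (h : IsR u u') :
    ∫⁻ x, ENNReal.ofReal (u x) ∂mu ≤ ∫⁻ x, ENNReal.ofReal (u' x) ∂mu := by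
  rw [layer mu h.mu_ h.nn, layer mu h.mu' h.nn']
  exact setLIntegral_mono' measurableSet_Ioi fun a ha => h.le (le_of_lt ha)

lemma IsR.lintegral_ge {u u' : ℝ → ℝ} (h : IsR u u') :
    ∫⁻ x, ENNReal.ofReal (u' x) ∂mu ≤ ∫⁻ x, ENNReal.ofReal (u x) ∂mu := by
  rw [layer mu h.mu_ h.nn, layer mu h.mu' h.nn']
  exact setLIntegral_mono' measurableSet_Ioi fun a ha => h.ge (le_of_lt ha)

lemma layer2 {u v : ℝ → ℝ} (hu : Measurable u) (u0 : ∀ x, 0 ≤ u x)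
    (hv : Measurable v) (v0 : ∀ x, 0 ≤ v x) :
    ∫⁻ x, ENNReal.ofReal (v x) * ENNReal.ofReal (u x) ∂mu
      = ∫⁻ a in Ioi (0:ℝ), ∫⁻ b in Ioi (0:ℝ), mu ({x | b < v x} ∩ {x | a < u x}) := by
  have h1 := lintegral_withDensity_eq_lintegral_mul mu hv.ennreal_ofReal hu.ennreal_ofReal
  simp only [Pi.mul_apply] at h1
  rw [← h1, layer _ hu u0]
  congr 1
  ext a
  have hA : MeasurableSet {x | a < u x} := measurableSet_lt measurable_const hu
  rw [withDensity_apply _ hA, layer _ hv v0]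
  congr 1
  ext b
  rw [Measure.restrict_apply (measurableSet_lt measurable_const hv)]

/-- Hardy-Littlewood inequality. -/
lemma IsR.hardy_littlewood {u u' v v' : ℝ → ℝ} (h : IsR u u') (k : IsR v v') :
    ∫⁻ x, ENNReal.ofReal (v x) * ENNReal.ofReal (u x) ∂mu
      ≤ ∫⁻ x, ENNReal.ofReal (v' x) * ENNReal.ofReal (u' x) ∂mu := by
  rw [layer2 h.mu_ h.nn k.mu_ k.nn, layer2 h.mu' h.nn' k.mu' k.nn']
  exact setLIntegral_mono' measurableSet_Ioi fun a ha =>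
    setLIntegral_mono' measurableSet_Ioi fun b hb => h.inter_le k (le_of_lt ha) (le_of_lt hb)

lemma dual {u u' : ℝ → ℝ → ℝ} (hu : Measurable (Function.uncurry u))
    (hu' : Measurable (Function.uncurry u')) (h : ∀ y, IsR (fun x => u x y) (fun x => u' x y))
    {r s : ℝ} (hrs : r.HolderConjugate s) {v : ℝ → ℝ} (hv : Measurable v) (v0 : ∀ x, 0 ≤ v x) :
    ∫⁻ x, ENNReal.ofReal (v x) * (∫⁻ y, ENNReal.ofReal (u x y) ∂mu) ∂mu ≤
      (∫⁻ x, ENNReal.ofReal (v x) ^ s ∂mu) ^ (1 / s) *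
      (∫⁻ x, (∫⁻ y, ENNReal.ofReal (u' x y) ∂mu) ^ r ∂mu) ^ (1 / r) := by
  have k : IsR v (R v) := by
    have := isR_R hv
    simpa only [abs_of_nonneg (v0 _)] using this
  have hs : 0 < s := hrs.symm.pos
  have sw : ∀ {w : ℝ → ℝ → ℝ} {z : ℝ → ℝ}, Measurable (Function.uncurry w) → Measurable z →
      ∫⁻ x, ENNReal.ofReal (z x) * (∫⁻ y, ENNReal.ofReal (w x y) ∂mu) ∂mu
        = ∫⁻ y, ∫⁻ x, ENNReal.ofReal (z x) * ENNReal.ofReal (w x y) ∂mu ∂mu := by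
    intro w z hw hz
    rw [lintegral_lintegral_swap
      (((hz.comp measurable_snd).ennreal_ofReal.mul
        (hw.comp measurable_swap).ennreal_ofReal).aemeasurable)]
    congr 1
    ext x
    rw [lintegral_const_mul]
    exact (hw.comp (measurable_const.prodMk measurable_id)).ennreal_ofReal
  rw [sw hu hv]
  calc _ ≤ ∫⁻ y, ∫⁻ x, ENNReal.ofReal (R v x) * ENNReal.ofReal (u' x y) ∂mu ∂mu :=
        lintegral_mono fun y => (h y).hardy_littlewood k
    _ = ∫⁻ x, ENNReal.ofReal (R v x) * (∫⁻ y, ENNReal.ofReal (u' x y) ∂mu) ∂mu :=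
        (sw hu' k.mu').symm
    _ ≤ (∫⁻ x, ENNReal.ofReal (R v x) ^ s ∂mu) ^ (1 / s) *
      (∫⁻ x, (∫⁻ y, ENNReal.ofReal (u' x y) ∂mu) ^ r ∂mu) ^ (1 / r) :=
        ENNReal.lintegral_mul_le_Lp_mul_Lq mu hrs.symm k.mu'.ennreal_ofReal.aemeasurable
          (Measurable.lintegral_prod_right hu'.ennreal_ofReal).aemeasurable
    _ ≤ _ := by
        gcongr ?_ ^ _ * _
        have := (k.rpow hs).lintegral_ge
        simpa only [ENNReal.ofReal_rpow_of_nonneg (k.nn _) hs.le,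
          ENNReal.ofReal_rpow_of_nonneg (k.nn' _) hs.le] using this

lemma main {u u' : ℝ → ℝ → ℝ} (hu : Measurable (Function.uncurry u))
    (hu' : Measurable (Function.uncurry u')) (h : ∀ y, IsR (fun x => u x y) (fun x => u' x y))
    {r : ℝ} (hr : 1 ≤ r) :
    ∫⁻ x, (∫⁻ y, ENNReal.ofReal (u x y) ∂mu) ^ r ∂mu ≤
      ∫⁻ x, (∫⁻ y, ENNReal.ofReal (u' x y) ∂mu) ^ r ∂mu := by
  rcases hr.eq_or_lt with rfl | hr
  · simp only [ENNReal.rpow_one]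
    rw [lintegral_lintegral_swap (f := fun x y => ENNReal.ofReal (u x y)) hu.ennreal_ofReal.aemeasurable,
      lintegral_lintegral_swap (f := fun x y => ENNReal.ofReal (u' x y)) hu'.ennreal_ofReal.aemeasurable]
    exact lintegral_mono fun y => (h y).lintegral_le
  have hr0 : 0 < r := by linarith
  have hrs := Real.HolderConjugate.conjExponent hr
  set s := r.conjExponent with hs
  have hs0 : 0 < s := hrs.symm.pos
  set F : ℝ → ENNReal := fun x => ∫⁻ y, ENNReal.ofReal (u x y) ∂mu with hF
  have hFm : Measurable F := Measurable.lintegral_prod_right hu.ennreal_ofReal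
  set N := ∫⁻ x, (∫⁻ y, ENNReal.ofReal (u' x y) ∂mu) ^ r ∂mu with hN
  have key : ∀ n : ℕ, ∫⁻ x, (min (F x) n) ^ r ∂mu ≤ N := by
    intro n
    have hlt : ∀ x, min (F x) n ^ (r - 1) ≠ ⊤ := fun x =>
      ENNReal.rpow_ne_top_of_nonneg (by linarith)
        (ne_top_of_le_ne_top (ENNReal.natCast_ne_top n) (min_le_right _ _))
    have hd := dual hu hu' h hrs (v := fun x => (min (F x) n ^ (r - 1)).toReal)
      ((hFm.min measurable_const).pow_const _).ennreal_toReal (fun x => ENNReal.toReal_nonneg)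
    simp only [ENNReal.ofReal_toReal (hlt _), ← ENNReal.rpow_mul] at hd
    have e : (r - 1) * s = r := hrs.sub_one_mul_conj
    rw [e] at hd
    set A := ∫⁻ x, (min (F x) n) ^ r ∂mu with hA
    have hAt : A ≠ ⊤ := by
      have : A ≤ ∫⁻ x, (n:ENNReal) ^ r ∂mu :=
        lintegral_mono fun x => ENNReal.rpow_le_rpow (min_le_right _ _) hr0.le
      refine ne_top_of_le_ne_top ?_ this
      rw [lintegral_const]
      exact ENNReal.mul_ne_top (ENNReal.rpow_ne_top_of_nonneg hr0.le (ENNReal.natCast_ne_top n))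
        (measure_ne_top _ _)
    have hle : A ≤ A ^ (1 / s) * N ^ (1 / r) := by
      refine le_trans (lintegral_mono fun x => ?_) hd
      have : min (F x) n ^ r = min (F x) n ^ (r - 1) * min (F x) n := by
        conv_lhs => rw [show r = (r - 1) + 1 by ring,
          ENNReal.rpow_add_of_nonneg _ _ (by linarith) zero_le_one, ENNReal.rpow_one]
      rw [this]
      gcongr
      exact min_le_left _ _
    by_cases hA0 : A = 0
    · rw [hA0]; exact zero_le
    have e1 : A = A ^ (1 / s) * A ^ (1 / r) := by
      rw [← ENNReal.rpow_add _ _ hA0 hAt]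
      have : 1 / s + 1 / r = 1 := by
        have := hrs.symm.inv_add_inv_eq_one
        simpa using this
      rw [this, ENNReal.rpow_one]
    rw [e1] at hle
    have e2 : (A ^ (1 / s) * A ^ (1 / r)) ^ (1 / s) = A ^ (1 / s) := by rw [← e1]
    rw [e2] at hle
    have h1 : A ^ (1 / r) ≤ N ^ (1 / r) := by
      refine (ENNReal.mul_le_mul_iff_right ?_ ?_).1 hle
      · exact (ENNReal.rpow_pos (pos_iff_ne_zero.2 hA0) hAt).ne'
      · exact ENNReal.rpow_ne_top_of_nonneg (by positivity) hAt
    exact (ENNReal.rpow_le_rpow_iff (by positivity)).1 h1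
  have hT : Filter.Tendsto (fun n : ℕ => ∫⁻ x, (min (F x) n) ^ r ∂mu) Filter.atTop
      (nhds (∫⁻ x, (F x) ^ r ∂mu)) := by
    apply lintegral_tendsto_of_tendsto_of_monotone
    · intro n
      exact ((hFm.min measurable_const).pow_const _).aemeasurable
    · refine Filter.Eventually.of_forall fun x m n hmn => ?_
      have : (m : ENNReal) ≤ n := by exact_mod_cast hmn
      exact ENNReal.rpow_le_rpow (min_le_min le_rfl this) hr0.le
    · refine Filter.Eventually.of_forall fun x => ?_
      have h1 : Filter.Tendsto (fun n : ℕ => min (F x) (n : ENNReal)) Filter.atTop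
          (nhds (min (F x) ⊤)) :=
        tendsto_const_nhds.min ENNReal.tendsto_nat_nhds_top
      rw [min_top_right] at h1
      exact (ENNReal.continuous_rpow_const.tendsto _).comp h1
  exact le_of_tendsto' hT key

end RearrAux

open RearrAux

/-- Minkowski-type inequality (part b): for `0 < p ≤ q < ∞`,
`(∫₀¹(∫₀¹ |f(x₁,x₂)|^p dx₂)^{q/p} dx₁)^{1/q}
  ≤ (∫₀¹(∫₀¹ (f^{*₁}(t₁,x₂))^p dx₂)^{q/p} dt₁)^{1/q}`. -/
theorem stmt_3 (p q : ℝ) (hp : 0 < p) (hpq : p ≤ q)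
    (f : ℝ → ℝ → ℝ) (hf : Measurable (Function.uncurry f)) :
    (∫⁻ x₁ in Icc (0:ℝ) 1,
        (∫⁻ x₂ in Icc (0:ℝ) 1, ENNReal.ofReal |f x₁ x₂| ^ p) ^ (q / p)) ^ (1 / q)
      ≤ (∫⁻ t₁ in Icc (0:ℝ) 1,
        (∫⁻ x₂ in Icc (0:ℝ) 1, ENNReal.ofReal (rearr1 f t₁ x₂) ^ p) ^ (q / p)) ^ (1 / q) := by
  have hq : 0 < q := hp.trans_le hpq
  have hs : ∀ y, Measurable fun x => f x y :=
    fun y => hf.comp (measurable_id.prodMk measurable_const)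
  refine ENNReal.rpow_le_rpow ?_ (by positivity)
  have hm := main (u := fun x y => |f x y| ^ p) (u' := fun t y => R (fun x => f x y) t ^ p)
    (hf.abs.pow_const p) ((R_measurable hf).pow_const p)
    (fun y => (isR_R (hs y)).rpow hp) ((one_le_div hp).2 hpq)
  simp only [← ENNReal.ofReal_rpow_of_nonneg (abs_nonneg _) hp.le,
    ← ENNReal.ofReal_rpow_of_nonneg (R_nonneg _ _) hp.le] at hm
  refine hm.trans (le_of_eq ?_)
  change _ = ∫⁻ t₁, (∫⁻ x₂, ENNReal.ofReal (rearr1 f t₁ x₂) ^ p ∂mu) ^ (q / p) ∂mu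
  apply lintegral_congr_ae
  have h0 : ∀ᵐ t ∂mu, t ∉ Iic (0:ℝ) := measure_eq_zero_iff_ae_notMem.1 mu_Iic
  filter_upwards [h0] with t ht
  have ht' : 0 < t := by simpa using ht
  simp only [R, ht', if_true, rearr1]
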